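/- Let Ω ⊆ ℝ^N be a bounded open set, p ≥ 2 a real number and q = p/(p−1). Let B : L^q(Ω) → L^p(Ω) be a positive continuous linear operator and g ∈ L^p(Ω). Suppose (y_k) and (z_k) are sequences in L^p(Ω) such that y_k → y₀ strongly in L^p(Ω), z_k → z₀ weakly in L^p(Ω), and for every k the Hammerstein equation z_k + B(|y_k|^{p−2}y_k + |z_k|^{p−2}z_k) = g holds in L^p(Ω). Then z_k → z₀ strongly in L^p(Ω), and z₀ satisfies the limit equation z₀ + B(|y₀|^{p−2}y₀ + |z₀|^{p−2}z₀) = g. -/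

import Mathlib

open MeasureTheory Filter Topology

/-! The duality map `Φ u = |u|^{p-2} u` is `p`-uniformly monotone from `L^p` to `L^q`:
`‖u - v‖ ^ p ≤ 2 ^ (p - 1) * ⟨u - v, Φ u - Φ v⟩`. Let two solutions `z`, `z'` of the Hammerstein
equation have data `f = Φ y`, `f' = Φ y'`. Since `z - z' = -(B (f + Φ z) - B (f' + Φ z'))`,
monotonicity of `B` gives `⟨z - z', Φ z - Φ z'⟩ ≤ -⟨z - z', f - f'⟩`, whence
`‖z - z'‖ ^ (p - 1) ≤ C * ‖f - f'‖`. As `Φ` is continuous, `f k = Φ (y k)` converges and `z k` is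
therefore Cauchy; its strong limit solves the limit equation and agrees with the weak limit. -/

section ScalarDualityMap

/-- The scalar nonlinearity `t ↦ |t|^{p-2} t`, the derivative of `|t|^p / p`. It is written exactly
as in the Hammerstein equation; at `p = 2` the convention `0 ^ 0 = 1` makes it the identity. -/
noncomputable def dualityMap (p t : ℝ) : ℝ := |t| ^ (p - 2) * t

variable {p : ℝ}

lemma measurable_dualityMap : Measurable (dualityMap p) := by
  unfold dualityMap
  fun_prop

lemma abs_rpow_sub_one_eq_mul_abs (hp : p ≠ 1) (t : ℝ) :
    |t| ^ (p - 1) = |t| ^ (p - 2) * |t| := by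
  have hsub : p - 2 + 1 = p - 1 := by ring
  rw [← Real.rpow_add_one' (abs_nonneg t) (hsub ▸ sub_ne_zero.2 hp), hsub]

lemma abs_dualityMap (hp : p ≠ 1) (t : ℝ) : |dualityMap p t| = |t| ^ (p - 1) := by
  rw [dualityMap, abs_mul, abs_of_nonneg (by positivity : 0 ≤ |t| ^ (p - 2)),
    abs_rpow_sub_one_eq_mul_abs hp]

lemma abs_rpow_eq_mul_sq (hp : p ≠ 0) (t : ℝ) : |t| ^ p = |t| ^ (p - 2) * t ^ 2 := by
  rw [← sq_abs, ← Real.rpow_two, ← Real.rpow_add' (abs_nonneg t) (by rwa [sub_add_cancel]),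
    sub_add_cancel]

lemma mul_dualityMap_self (hp : p ≠ 0) (t : ℝ) : t * dualityMap p t = |t| ^ p := by
  rw [dualityMap, abs_rpow_eq_mul_sq hp]
  ring

lemma rpow_sub_rpow_le_mul_sub {r s t : ℝ} (hr : 1 ≤ r) (ht : 0 ≤ t) (hts : t ≤ s) :
    s ^ r - t ^ r ≤ r * s ^ (r - 1) * (s - t) := by
  rcases hts.eq_or_lt with rfl | hlt
  · simp only [sub_self, mul_zero, le_refl]
  · have hslope := (convexOn_rpow hr).slope_le_of_hasDerivAt (Set.mem_Ici.2 ht)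
      (Set.mem_Ici.2 (ht.trans hts)) hlt (Real.hasDerivAt_rpow_const (Or.inr hr))
    rwa [slope_def_field, div_le_iff₀ (sub_pos.2 hlt)] at hslope

lemma abs_dualityMap_sub_le (hp : 2 ≤ p) (a b : ℝ) :
    |dualityMap p a - dualityMap p b| ≤ (p - 1) * ((|a| + |b|) ^ (p - 2) * |a - b|) := by
  wlog hba : |b| ≤ |a| generalizing a b
  · rw [abs_sub_comm, add_comm, abs_sub_comm a]
    exact this b a (le_of_not_ge hba)
  have hpow : |b| ^ (p - 2) ≤ |a| ^ (p - 2) :=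
    Real.rpow_le_rpow (abs_nonneg b) hba (by linarith)
  have htangent := rpow_sub_rpow_le_mul_sub (r := p - 1) (by linarith) (abs_nonneg b) hba
  rw [abs_rpow_sub_one_eq_mul_abs (by linarith), abs_rpow_sub_one_eq_mul_abs (by linarith),
    show p - 1 - 1 = p - 2 by ring] at htangent
  calc |dualityMap p a - dualityMap p b|
      = |(|a| ^ (p - 2) * (a - b) + (|a| ^ (p - 2) - |b| ^ (p - 2)) * b)| := by
        unfold dualityMap
        ring_nf
    _ ≤ |a| ^ (p - 2) * |a - b| + (|a| ^ (p - 2) - |b| ^ (p - 2)) * |b| := by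
        refine (abs_add_le _ _).trans_eq ?_
        rw [abs_mul, abs_mul, abs_of_nonneg (sub_nonneg.2 hpow),
          abs_of_nonneg (by positivity : 0 ≤ |a| ^ (p - 2))]
    _ ≤ |a| ^ (p - 2) * |a - b| + (p - 2) * |a| ^ (p - 2) * (|a| - |b|) := by linarith
    _ ≤ |a| ^ (p - 2) * |a - b| + (p - 2) * |a| ^ (p - 2) * |a - b| := by
        have : 0 ≤ p - 2 := by linarith
        gcongr
        exact abs_sub_abs_le_abs_sub a b
    _ = (p - 1) * (|a| ^ (p - 2) * |a - b|) := by ring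
    _ ≤ (p - 1) * ((|a| + |b|) ^ (p - 2) * |a - b|) := by
        have : 0 ≤ p - 1 := by linarith
        have : 0 ≤ p - 2 := by linarith
        gcongr
        exact le_add_of_nonneg_right (abs_nonneg b)

lemma add_rpow_le_two_rpow_mul_add_rpow {r s t : ℝ} (hr : 0 ≤ r) (hs : 0 ≤ s) (ht : 0 ≤ t) :
    (s + t) ^ r ≤ 2 ^ r * (s ^ r + t ^ r) := by
  wlog hst : s ≤ t generalizing s t
  · rw [add_comm s, add_comm (s ^ r)]
    exact this ht hs (le_of_not_ge hst)
  calc (s + t) ^ r ≤ (2 * t) ^ r := Real.rpow_le_rpow (by positivity) (by linarith) hr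
    _ = 2 ^ r * t ^ r := Real.mul_rpow zero_le_two ht
    _ ≤ 2 ^ r * (s ^ r + t ^ r) := by
        gcongr
        exact le_add_of_nonneg_left (by positivity)

lemma rpow_add_rpow_mul_sq_sub_le (hp : 2 ≤ p) (a b : ℝ) :
    (|a| ^ (p - 2) + |b| ^ (p - 2)) * (a - b) ^ 2 ≤
      2 * ((a - b) * (dualityMap p a - dualityMap p b)) := by
  have hmono : 0 ≤ (|a| ^ (p - 2) - |b| ^ (p - 2)) * (|a| ^ 2 - |b| ^ 2) := by
    rcases le_total |a| |b| with h | h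
    · exact mul_nonneg_of_nonpos_of_nonpos
        (sub_nonpos.2 (Real.rpow_le_rpow (abs_nonneg a) h (by linarith)))
        (sub_nonpos.2 (by gcongr))
    · exact mul_nonneg
        (sub_nonneg.2 (Real.rpow_le_rpow (abs_nonneg b) h (by linarith)))
        (sub_nonneg.2 (by gcongr))
  rw [sq_abs, sq_abs] at hmono
  -- the right-hand side minus the left-hand side is exactly the product in `hmono`
  unfold dualityMap
  linarith

lemma abs_sub_rpow_le_mul_dualityMap_sub (hp : 2 ≤ p) (a b : ℝ) :
    |a - b| ^ p ≤ 2 ^ (p - 1) * ((a - b) * (dualityMap p a - dualityMap p b)) := by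
  have hp' : 0 ≤ p - 2 := by linarith
  calc |a - b| ^ p = |a - b| ^ (p - 2) * (a - b) ^ 2 := abs_rpow_eq_mul_sq (by linarith) _
    _ ≤ (|a| + |b|) ^ (p - 2) * (a - b) ^ 2 := by
        gcongr
        exact abs_sub a b
    _ ≤ 2 ^ (p - 2) * (|a| ^ (p - 2) + |b| ^ (p - 2)) * (a - b) ^ 2 := by
        gcongr
        exact add_rpow_le_two_rpow_mul_add_rpow hp' (abs_nonneg a) (abs_nonneg b)
    _ ≤ 2 ^ (p - 2) * (2 * ((a - b) * (dualityMap p a - dualityMap p b))) := by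
        rw [mul_assoc]
        exact mul_le_mul_of_nonneg_left (rpow_add_rpow_mul_sq_sub_le hp a b) (by positivity)
    _ = 2 ^ (p - 1) * ((a - b) * (dualityMap p a - dualityMap p b)) := by
        rw [show p - 1 = p - 2 + 1 by ring, Real.rpow_add_one two_ne_zero]
        ring

end ScalarDualityMap

section UniformlyMonotone

variable {E E' ι : Type*} [NormedAddCommGroup E] [NormedSpace ℝ E] [NormedAddCommGroup E']
  [NormedSpace ℝ E'] {T : E →L[ℝ] E' →L[ℝ] ℝ} {Φ : E → E'} {B : E' → E} {l : Filter ι} {C p : ℝ}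

lemma norm_sub_rpow_le_of_add_comp_eq (hp : p ≠ 1) (hC : 0 ≤ C)
    (hΦ : ∀ u v, ‖u - v‖ ^ p ≤ C * T (u - v) (Φ u - Φ v))
    (hB : ∀ u v, 0 ≤ T (B u - B v) (u - v)) {z z' g : E} {f f' : E'}
    (hz : z + B (f + Φ z) = g) (hz' : z' + B (f' + Φ z') = g) :
    ‖z - z'‖ ^ (p - 1) ≤ C * ‖T‖ * ‖f - f'‖ := by
  have hmono : T (z - z') (Φ z - Φ z') ≤ -T (z - z') (f - f') := by
    have h := hB (f + Φ z) (f' + Φ z')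
    rw [eq_sub_of_add_eq' hz, eq_sub_of_add_eq' hz', sub_sub_sub_cancel_left, ← neg_sub z z',
      add_sub_add_comm, map_neg, neg_apply, map_add] at h
    linarith
  have hbound : ‖z - z'‖ ^ p ≤ C * ‖T‖ * ‖f - f'‖ * ‖z - z'‖ :=
    calc ‖z - z'‖ ^ p ≤ C * T (z - z') (Φ z - Φ z') := hΦ z z'
      _ ≤ C * (‖T‖ * ‖z - z'‖ * ‖f - f'‖) := by
        gcongr
        exact hmono.trans ((neg_le_abs _).trans (T.le_opNorm₂ _ _))
      _ = C * ‖T‖ * ‖f - f'‖ * ‖z - z'‖ := by ring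
  rcases (norm_nonneg (z - z')).eq_or_lt with h | h
  · rw [← h, Real.zero_rpow (sub_ne_zero.2 hp)]
    positivity
  · rwa [Real.rpow_sub_one h.ne', div_le_iff₀ h]

lemma cauchy_map_of_dist_rpow_le {X Y : Type*} [PseudoMetricSpace X] [PseudoMetricSpace Y]
    {z : ι → X} {f : ι → Y} {r K : ℝ} (hr : 0 < r) (hf : Cauchy (map f l))
    (h : ∀ i j, dist (z i) (z j) ^ r ≤ K * dist (f i) (f j)) : Cauchy (map z l) := by
  rw [cauchy_map_iff, tendsto_uniformity_iff_dist_tendsto_zero] at hf ⊢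
  have hlim : Tendsto (fun i : ι × ι => (K * dist (f i.1) (f i.2)) ^ r⁻¹) (l ×ˢ l) (𝓝 0) := by
    simpa only [mul_zero, Real.zero_rpow (inv_ne_zero hr.ne')] using
      (hf.2.const_mul K).rpow_const (Or.inr (inv_nonneg.2 hr.le))
  refine ⟨hf.1, squeeze_zero (fun _ => dist_nonneg) (fun i => ?_) hlim⟩
  have hK := (Real.rpow_nonneg dist_nonneg r).trans (h i.1 i.2)
  exact (Real.le_rpow_inv_iff_of_pos dist_nonneg hK hr).2 (h i.1 i.2)

theorem exists_tendsto_of_add_comp_eq [CompleteSpace E] [l.NeBot] (hp : 1 < p) (hC : 0 ≤ C)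
    (hΦ : ∀ u v, ‖u - v‖ ^ p ≤ C * T (u - v) (Φ u - Φ v)) (hΦc : Continuous Φ)
    (hB : ∀ u v, 0 ≤ T (B u - B v) (u - v)) (hBc : Continuous B) {g : E} {z : ι → E}
    {f : ι → E'} {f₀ : E'} (hf : Tendsto f l (𝓝 f₀)) (hz : ∀ i, z i + B (f i + Φ (z i)) = g) :
    ∃ z₀, Tendsto z l (𝓝 z₀) ∧ z₀ + B (f₀ + Φ z₀) = g := by
  have hcauchy : Cauchy (map z l) := by
    refine cauchy_map_of_dist_rpow_le (K := C * ‖T‖) (sub_pos.2 hp) hf.cauchy_map fun i j => ?_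
    rw [dist_eq_norm, dist_eq_norm]
    exact norm_sub_rpow_le_of_add_comp_eq hp.ne' hC hΦ hB (hz i) (hz j)
  obtain ⟨z₀, hz₀⟩ := cauchy_map_iff_exists_tendsto.1 hcauchy
  have hlim : Tendsto (fun i => z i + B (f i + Φ (z i))) l (𝓝 (z₀ + B (f₀ + Φ z₀))) :=
    hz₀.add ((hBc.tendsto _).comp (hf.add ((hΦc.tendsto z₀).comp hz₀)))
  simp only [hz] at hlim
  exact ⟨z₀, hz₀, tendsto_nhds_unique hlim tendsto_const_nhds⟩

end UniformlyMonotone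

section LpDualityMap

variable {α : Type*} [MeasurableSpace α] {μ : Measure α} {p q : ℝ}

lemma memLp_dualityMap (hpq : p.HolderConjugate q) {f : α → ℝ}
    (hf : MemLp f (ENNReal.ofReal p) μ) :
    MemLp (fun x => dualityMap p (f x)) (ENNReal.ofReal q) μ := by
  have hpow := hf.norm_rpow_div (ENNReal.ofReal (p - 1))
  rw [ENNReal.toReal_ofReal hpq.sub_one_pos.le, ← ENNReal.ofReal_div_of_pos hpq.sub_one_pos,
    ← hpq.conjugate_eq] at hpow
  refine hpow.congr_norm
    (measurable_dualityMap.comp_aemeasurable hf.1.aemeasurable).aestronglyMeasurable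
    (Eventually.of_forall fun x => ?_)
  rw [Real.norm_rpow_of_nonneg (norm_nonneg _), norm_norm, Real.norm_eq_abs, Real.norm_eq_abs,
    abs_dualityMap hpq.lt.ne']

lemma eLpNorm_norm_rpow_div_le {F : Type*} [NormedAddCommGroup F] (f : α → F) (s : ENNReal)
    {r : ℝ} (hr : 0 ≤ r) :
    eLpNorm (fun x => ‖f x‖ ^ r) (s / ENNReal.ofReal r) μ ≤ eLpNorm f s μ ^ r := by
  rcases hr.eq_or_lt with rfl | hr
  · simp only [Real.rpow_zero, ENNReal.rpow_zero]
    refine (eLpNorm_le_of_ae_bound (C := 1) (by simp)).trans ?_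
    simp
  · rw [eLpNorm_norm_rpow f hr, ENNReal.div_mul_cancel (by simpa using hr) ENNReal.ofReal_ne_top]

-- The first exponent is read in `ENNReal`, so that it is `p / 0 = ∞` at `p = 2`.
lemma holderTriple_div_ofReal_sub_two (hp : 2 ≤ p) (hpq : p.HolderConjugate q) :
    (ENNReal.ofReal p / ENNReal.ofReal (p - 2)).HolderTriple (ENNReal.ofReal p)
      (ENNReal.ofReal q) := by
  have hp0 : 0 < p := hpq.pos
  constructor
  rw [ENNReal.inv_div (Or.inl ENNReal.ofReal_ne_top) (Or.inr (by simpa using hp0)),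
    ← ENNReal.ofReal_div_of_pos hp0, ← ENNReal.ofReal_inv_of_pos hp0,
    ← ENNReal.ofReal_inv_of_pos hpq.symm.pos,
    ← ENNReal.ofReal_add (div_nonneg (by linarith) hp0.le) (by positivity)]
  congr 1
  rw [hpq.conjugate_eq, inv_div]
  field_simp
  ring

lemma eLpNorm_dualityMap_sub_le (hp : 2 ≤ p) (hpq : p.HolderConjugate q) {f g : α → ℝ}
    (hf : AEStronglyMeasurable f μ) (hg : AEStronglyMeasurable g μ) :
    eLpNorm (fun x => dualityMap p (f x) - dualityMap p (g x)) (ENNReal.ofReal q) μ ≤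
      ENNReal.ofReal (p - 1) *
        ((eLpNorm f (ENNReal.ofReal p) μ + eLpNorm g (ENNReal.ofReal p) μ) ^ (p - 2) *
          eLpNorm (f - g) (ENNReal.ofReal p) μ) := by
  have := holderTriple_div_ofReal_sub_two hp hpq
  have hp1 : 1 ≤ ENNReal.ofReal p := ENNReal.one_le_ofReal.2 hpq.lt.le
  have hp2 : 0 ≤ p - 2 := sub_nonneg.2 hp
  set h : α → ℝ := (fun x => ‖f x‖) + fun x => ‖g x‖
  have hh : AEStronglyMeasurable h μ := hf.norm.add hg.norm
  calc eLpNorm (fun x => dualityMap p (f x) - dualityMap p (g x)) (ENNReal.ofReal q) μ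
      ≤ ENNReal.ofReal (p - 1) *
          eLpNorm ((fun x => ‖h x‖ ^ (p - 2)) • (f - g)) (ENNReal.ofReal q) μ := by
        refine eLpNorm_le_mul_eLpNorm_of_ae_le_mul (Eventually.of_forall fun x => ?_) _
        have hx : ‖h x‖ = |f x| + |g x| :=
          Real.norm_of_nonneg <| add_nonneg (norm_nonneg _) (norm_nonneg _)
        rw [Pi.smul_apply', smul_eq_mul, norm_mul, hx,
          Real.norm_of_nonneg (by positivity : 0 ≤ (|f x| + |g x|) ^ (p - 2))]
        exact abs_dualityMap_sub_le hp (f x) (g x)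
    _ ≤ ENNReal.ofReal (p - 1) *
          (eLpNorm (fun x => ‖h x‖ ^ (p - 2)) (ENNReal.ofReal p / ENNReal.ofReal (p - 2)) μ *
            eLpNorm (f - g) (ENNReal.ofReal p) μ) := by
        gcongr
        exact eLpNorm_smul_le_mul_eLpNorm (hf.sub hg)
          (hh.norm.aemeasurable.pow_const _).aestronglyMeasurable
    _ ≤ ENNReal.ofReal (p - 1) * (eLpNorm h (ENNReal.ofReal p) μ ^ (p - 2) *
          eLpNorm (f - g) (ENNReal.ofReal p) μ) := by
        gcongr
        exact eLpNorm_norm_rpow_div_le h _ hp2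
    _ ≤ _ := by
        gcongr
        simpa only [eLpNorm_norm] using eLpNorm_add_le hf.norm hg.norm hp1

/-- The superposition operator `u ↦ |u|^{p-2} u` from `L^p` to `L^q`, with `q` conjugate to `p`: up
to the factor `‖u‖ ^ (p - 2)`, the duality map of `L^p`. -/
noncomputable def lpDualityMap (hpq : p.HolderConjugate q) (u : Lp ℝ (ENNReal.ofReal p) μ) :
    Lp ℝ (ENNReal.ofReal q) μ :=
  (memLp_dualityMap hpq (Lp.memLp u)).toLp _

lemma coeFn_lpDualityMap (hpq : p.HolderConjugate q) (u : Lp ℝ (ENNReal.ofReal p) μ) :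
    lpDualityMap hpq u =ᵐ[μ] fun x => dualityMap p (u x) :=
  MemLp.coeFn_toLp _

lemma eq_lpDualityMap_add_iff (hpq : p.HolderConjugate q) {F : Lp ℝ (ENNReal.ofReal q) μ}
    {u v : Lp ℝ (ENNReal.ofReal p) μ} :
    F = lpDualityMap hpq u + lpDualityMap hpq v ↔
      F =ᵐ[μ] fun x => |u x| ^ (p - 2) * u x + |v x| ^ (p - 2) * v x := by
  have hsum : ⇑(lpDualityMap hpq u + lpDualityMap hpq v) =ᵐ[μ]
      fun x => dualityMap p (u x) + dualityMap p (v x) :=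
    (Lp.coeFn_add _ _).trans ((coeFn_lpDualityMap hpq u).add (coeFn_lpDualityMap hpq v))
  rw [Lp.ext_iff]
  exact ⟨fun h => h.trans hsum, fun h => h.trans hsum.symm⟩

lemma norm_lpDualityMap_sub_le (hp : 2 ≤ p) (hpq : p.HolderConjugate q)
    (u v : Lp ℝ (ENNReal.ofReal p) μ) :
    ‖lpDualityMap hpq u - lpDualityMap hpq v‖ ≤
      (p - 1) * ((‖u‖ + ‖v‖) ^ (p - 2) * ‖u - v‖) := by
  have hsub : eLpNorm (⇑u - ⇑v) (ENNReal.ofReal p) μ ≠ ⊤ :=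
    ((Lp.memLp u).sub (Lp.memLp v)).eLpNorm_ne_top
  have hpow : (eLpNorm u (ENNReal.ofReal p) μ + eLpNorm v (ENNReal.ofReal p) μ) ^ (p - 2) ≠ ⊤ :=
    ENNReal.rpow_ne_top_of_nonneg (sub_nonneg.2 hp)
      (ENNReal.add_ne_top.2 ⟨Lp.eLpNorm_ne_top u, Lp.eLpNorm_ne_top v⟩)
  have hle := ENNReal.toReal_mono
    (ENNReal.mul_ne_top ENNReal.ofReal_ne_top (ENNReal.mul_ne_top hpow hsub))
    (eLpNorm_dualityMap_sub_le hp hpq (Lp.aestronglyMeasurable u) (Lp.aestronglyMeasurable v))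
  rw [lpDualityMap, lpDualityMap, ← MemLp.toLp_sub, Lp.norm_toLp]
  rwa [ENNReal.toReal_mul, ENNReal.toReal_mul, ← ENNReal.toReal_rpow,
    ENNReal.toReal_add (Lp.eLpNorm_ne_top u) (Lp.eLpNorm_ne_top v),
    ENNReal.toReal_ofReal hpq.sub_one_pos.le, ← Lp.norm_def, ← Lp.norm_def,
    ← eLpNorm_congr_ae (Lp.coeFn_sub u v), ← Lp.norm_def] at hle

lemma norm_rpow_eq_integral_abs_rpow (hp : 0 < p) (u : Lp ℝ (ENNReal.ofReal p) μ) :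
    ‖u‖ ^ p = ∫ x, |u x| ^ p ∂μ := by
  have hint : 0 ≤ ∫ x, |u x| ^ p ∂μ := integral_nonneg fun x => by positivity
  rw [Lp.norm_def, (Lp.memLp u).eLpNorm_eq_integral_rpow_norm (by simpa using hp)
    ENNReal.ofReal_ne_top, ENNReal.toReal_ofReal hp.le]
  simp only [Real.norm_eq_abs]
  rw [ENNReal.toReal_ofReal (by positivity), Real.rpow_inv_rpow hint hp.ne']

lemma integral_mul_lpDualityMap (hpq : p.HolderConjugate q) (u : Lp ℝ (ENNReal.ofReal p) μ) :
    ∫ x, u x * lpDualityMap hpq u x ∂μ = ‖u‖ ^ p := by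
  rw [norm_rpow_eq_integral_abs_rpow hpq.pos]
  refine integral_congr_ae ?_
  filter_upwards [coeFn_lpDualityMap hpq u] with x hx
  rw [hx, mul_dualityMap_self hpq.ne_zero]

lemma norm_sub_rpow_le_integral_mul_lpDualityMap_sub (hp : 2 ≤ p) (hpq : p.HolderConjugate q)
    (u v : Lp ℝ (ENNReal.ofReal p) μ) :
    ‖u - v‖ ^ p ≤
      2 ^ (p - 1) * ∫ x, (u - v) x * (lpDualityMap hpq u - lpDualityMap hpq v) x ∂μ := by
  have := hpq.ennrealOfReal
  rw [norm_rpow_eq_integral_abs_rpow hpq.pos, ← integral_const_mul]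
  refine integral_mono_of_nonneg (Eventually.of_forall fun x => by positivity)
    (((Lp.memLp (u - v)).integrable_mul (Lp.memLp _)).const_mul _) ?_
  filter_upwards [Lp.coeFn_sub u v, Lp.coeFn_sub (lpDualityMap hpq u) (lpDualityMap hpq v),
    coeFn_lpDualityMap hpq u, coeFn_lpDualityMap hpq v] with x hsub hΦsub hΦu hΦv
  rw [hsub, hΦsub, Pi.sub_apply, Pi.sub_apply, hΦu, hΦv]
  exact abs_sub_rpow_le_mul_dualityMap_sub hp (u x) (v x)

variable [Fact (1 ≤ ENNReal.ofReal p)] [Fact (1 ≤ ENNReal.ofReal q)]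

lemma continuous_lpDualityMap (hp : 2 ≤ p) (hpq : p.HolderConjugate q) :
    Continuous (lpDualityMap (μ := μ) hpq) := by
  refine continuous_iff_continuousAt.2 fun u => tendsto_iff_norm_sub_tendsto_zero.2 ?_
  have hbound : Continuous fun v : Lp ℝ (ENNReal.ofReal p) μ =>
      (p - 1) * ((‖v‖ + ‖u‖) ^ (p - 2) * ‖v - u‖) := by
    have hpow : Continuous fun v : Lp ℝ (ENNReal.ofReal p) μ => (‖v‖ + ‖u‖) ^ (p - 2) :=
      (continuous_norm.add_const _).rpow_const fun _ => Or.inr (sub_nonneg.2 hp)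
    fun_prop
  refine squeeze_zero (fun _ => norm_nonneg _) (norm_lpDualityMap_sub_le hp hpq · u) ?_
  simpa only [sub_self, norm_zero, mul_zero] using hbound.tendsto u

/-- The bilinear pairing `(u, w) ↦ ∫ u w` of `L^p` with `L^q`, for conjugate real exponents. -/
noncomputable def lpDualPairing (μ : Measure α) (hpq : p.HolderConjugate q) :
    Lp ℝ (ENNReal.ofReal p) μ →L[ℝ] Lp ℝ (ENNReal.ofReal q) μ →L[ℝ] ℝ :=
  have := hpq.ennrealOfReal
  (ContinuousLinearMap.mul ℝ ℝ).lpPairing μ (ENNReal.ofReal p) (ENNReal.ofReal q)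

lemma lpDualPairing_apply (hpq : p.HolderConjugate q) (u : Lp ℝ (ENNReal.ofReal p) μ)
    (w : Lp ℝ (ENNReal.ofReal q) μ) : lpDualPairing μ hpq u w = ∫ x, u x * w x ∂μ :=
  have := hpq.ennrealOfReal
  ContinuousLinearMap.lpPairing_eq_integral _ u w

lemma eq_of_tendsto_of_tendsto_integral_mul {ι : Type*} {l : Filter ι} [l.NeBot]
    (hpq : p.HolderConjugate q) {z : ι → Lp ℝ (ENNReal.ofReal p) μ}
    {u v : Lp ℝ (ENNReal.ofReal p) μ} (hu : Tendsto z l (𝓝 u))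
    (hv : ∀ w : Lp ℝ (ENNReal.ofReal q) μ,
      Tendsto (fun i => ∫ x, z i x * w x ∂μ) l (𝓝 (∫ x, v x * w x ∂μ))) :
    u = v := by
  simp only [← lpDualPairing_apply hpq] at hv
  have hpair (w : Lp ℝ (ENNReal.ofReal q) μ) :
      lpDualPairing μ hpq u w = lpDualPairing μ hpq v w :=
    tendsto_nhds_unique ((((lpDualPairing μ hpq).flip w).continuous.tendsto u).comp hu) (hv w)
  have hzero : ‖u - v‖ ^ p = 0 := by
    rw [← integral_mul_lpDualityMap hpq, ← lpDualPairing_apply hpq, map_sub, sub_apply, hpair,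
      sub_self]
  exact sub_eq_zero.1 (norm_eq_zero.1 ((Real.rpow_eq_zero (norm_nonneg _) hpq.ne_zero).1 hzero))

theorem hammerstein_strong_convergence_general {ι : Type*} {l : Filter ι} [l.NeBot] (hp : 2 ≤ p)
    (hpq : p.HolderConjugate q) {B : Lp ℝ (ENNReal.ofReal q) μ → Lp ℝ (ENNReal.ofReal p) μ}
    (hBc : Continuous B) (hBmono : ∀ u v, 0 ≤ ∫ x, (B u - B v) x * (u - v) x ∂μ)
    {g : Lp ℝ (ENNReal.ofReal p) μ} {y z : ι → Lp ℝ (ENNReal.ofReal p) μ}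
    {y₀ : Lp ℝ (ENNReal.ofReal p) μ} (hy : Tendsto y l (𝓝 y₀))
    (heq : ∀ i, z i + B (lpDualityMap hpq (y i) + lpDualityMap hpq (z i)) = g) :
    ∃ z₀, Tendsto z l (𝓝 z₀) ∧ z₀ + B (lpDualityMap hpq y₀ + lpDualityMap hpq z₀) = g := by
  have hΦ := continuous_lpDualityMap (μ := μ) hp hpq
  have hΦmono := norm_sub_rpow_le_integral_mul_lpDualityMap_sub (μ := μ) hp hpq
  simp only [← lpDualPairing_apply hpq] at hΦmono hBmono
  exact exists_tendsto_of_add_comp_eq hpq.lt (by positivity) hΦmono hΦ hBmono hBc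
    ((hΦ.tendsto y₀).comp hy) heq

end LpDualityMap

/-- Under the hypotheses of Statement 0, additionally the weakly convergent
sequence `z_k` in fact converges strongly in `L^p` to `z₀`, and `z₀` satisfies the limit
Hammerstein equation. -/
theorem hammerstein_strong_convergence
    {N : ℕ} (hN : 1 ≤ N)
    (Ω : Set (EuclideanSpace ℝ (Fin N))) (hΩo : IsOpen Ω)
    (hΩb : Bornology.IsBounded Ω)
    (p q : ℝ) (hp : 2 ≤ p) (hq : q = p / (p - 1))
    [Fact (1 ≤ ENNReal.ofReal p)] [Fact (1 ≤ ENNReal.ofReal q)]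
    (μ : Measure (EuclideanSpace ℝ (Fin N))) (hμ : μ = volume.restrict Ω)
    (B : Lp ℝ (ENNReal.ofReal q) μ →L[ℝ] Lp ℝ (ENNReal.ofReal p) μ)
    (hBpos : ∀ w : Lp ℝ (ENNReal.ofReal q) μ, 0 ≤ ∫ x, (B w) x * w x ∂μ)
    (g : Lp ℝ (ENNReal.ofReal p) μ)
    (y z : ℕ → Lp ℝ (ENNReal.ofReal p) μ)
    (y₀ z₀ : Lp ℝ (ENNReal.ofReal p) μ)
    -- strong convergence y_k → y₀ in L^p
    (hy : Tendsto (fun k => ‖y k - y₀‖) atTop (𝓝 0))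
    -- weak convergence z_k → z₀ in L^p
    (hz : ∀ w : Lp ℝ (ENNReal.ofReal q) μ,
      Tendsto (fun k => ∫ x, (z k) x * w x ∂μ) atTop (𝓝 (∫ x, z₀ x * w x ∂μ)))
    -- the Hammerstein equation holds for every k, where F k is the L^q element
    -- representing the nonlinearity |y_k|^{p-2}y_k + |z_k|^{p-2}z_k
    (F : ℕ → Lp ℝ (ENNReal.ofReal q) μ)
    (hF : ∀ k, (F k : EuclideanSpace ℝ (Fin N) → ℝ) =ᵐ[μ]
      fun x => |(y k) x| ^ (p - 2) * (y k) x + |(z k) x| ^ (p - 2) * (z k) x)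
    (heq : ∀ k, z k + B (F k) = g) :
    Tendsto (fun k => ‖z k - z₀‖) atTop (𝓝 0) ∧
    ∃ F₀ : Lp ℝ (ENNReal.ofReal q) μ,
      (F₀ : EuclideanSpace ℝ (Fin N) → ℝ) =ᵐ[μ]
        (fun x => |y₀ x| ^ (p - 2) * y₀ x + |z₀ x| ^ (p - 2) * z₀ x) ∧
      z₀ + B F₀ = g := by
  have hpq := (Real.holderConjugate_iff_eq_conjExponent (by linarith)).2 hq
  obtain ⟨z', hz', hlim⟩ := hammerstein_strong_convergence_general (z := z) hp hpq B.continuous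
    (fun u v => by simpa only [map_sub] using hBpos (u - v))
    (tendsto_iff_norm_sub_tendsto_zero.2 hy)
    (fun k => (eq_lpDualityMap_add_iff hpq).2 (hF k) ▸ heq k)
  obtain rfl := eq_of_tendsto_of_tendsto_integral_mul hpq hz' hz
  exact ⟨tendsto_iff_norm_sub_tendsto_zero.1 hz', _, (eq_lpDualityMap_add_iff hpq).1 rfl, hlim⟩
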